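/- arXiv:0811.1574 — 2 statements merged into one kernel-verified Lean document; each statement's English description precedes it below -/
import Mathlib

section
/- Let k be a field, A an associative unital k-algebra, and I a two-sided ideal of A with I·I = I (an idempotent ideal). Let M and N be right A/I-modules with M finitely generated, regarded also as right A-modules via the projection A → A/I. Then there is an isomorphism Ext¹_A(M, N) ≅ Ext¹_{A/I}(M, N). -/
open CategoryTheory

/-
Write `I = ker π`, and choose `0 → L → Q → M → 0` over `A/I` with `Q` free on the elements of `M`.
Let `P` be the free `A`-module on the same elements, with kernel `K` of `P → M`. The kernel of
`P → Q` is `P I = (P I) I`, hence lies in `K I` because `P I ⊆ K`, so that `L = K / K I` just as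
`Q = P / P I`. A map into the `A/I`-module `N` kills multiples of `I`, hence
`Hom_A(P, N) = Hom_{A/I}(Q, N)` and `Hom_A(K, N) = Hom_{A/I}(L, N)`. Both `Ext¹` groups are
therefore the same cokernel, that of `Hom(P, N) → Hom(K, N)`.
-/

section ExtOne

open Limits

universe w v u u'

variable {C : Type u} [Category.{v} C] [Abelian C]

lemma quasiIso_toSingle₀Equiv_symm {K : ChainComplex C ℕ} {X : C} {f : K.X 0 ⟶ X}
    {w : K.d 1 0 ≫ f = 0} [Epi f] (h₀ : (ShortComplex.mk (K.d 1 0) f w).Exact)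
    (h : ∀ n, K.ExactAt (n + 1)) :
    QuasiIso ((ChainComplex.toSingle₀Equiv K X).symm ⟨f, w⟩) where
  quasiIsoAt
    | 0 => by
      have f_zero := ChainComplex.toSingle₀Equiv_symm_apply_f_zero f w
      rw [ChainComplex.quasiIsoAt₀_iff, ShortComplex.quasiIso_iff_of_zeros' _
        (K.shape 0 0 (by simp)) rfl rfl]
      refine (ShortComplex.exact_and_epi_g_iff_of_iso ?_).2 ⟨h₀, inferInstanceAs (Epi f)⟩
      exact ShortComplex.isoMk (Iso.refl _) (Iso.refl _) (Iso.refl _)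
        ((Category.id_comp (K.d 1 0)).trans (Category.comp_id (K.d 1 0)).symm)
        ((Category.id_comp f).trans (f_zero.symm.trans
          (Category.comp_id (((K.toSingle₀Equiv X).symm ⟨f, w⟩).f 0)).symm))
    | n + 1 => (quasiIsoAt_iff_exactAt' _ _ (ChainComplex.exactAt_succ_single_obj _ _)).2 (h n)

variable {Z : C}

/-- The augmentation `R₀ ⟶ Z` of a projective resolution `R` of `Z`. This is `R.π.f 0`, with
codomain `Z` itself instead of the degree zero term of the complex `Z` concentrated in degree 0. -/
noncomputable def augmentation (R : ProjectiveResolution Z) : R.complex.X 0 ⟶ Z :=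
  R.π.f 0

instance epi_augmentation (R : ProjectiveResolution Z) : Epi (augmentation R) :=
  inferInstanceAs (Epi (R.π.f 0))

lemma d_comp_augmentation (R : ProjectiveResolution Z) : R.complex.d 1 0 ≫ augmentation R = 0 :=
  R.complex_d_comp_π_f_zero

lemma d_comp_augmentation_comp (R : ProjectiveResolution Z) {Y : C} (f : Z ⟶ Y) :
    R.complex.d 1 0 ≫ augmentation R ≫ f = 0 := by
  rw [← Category.assoc, d_comp_augmentation, zero_comp]

lemma exact_augmentation (R : ProjectiveResolution Z) :
    (ShortComplex.mk _ _ (d_comp_augmentation R)).Exact :=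
  R.exact₀

variable {S : ShortComplex C}

/-- The complex `⋯ ⟶ R₁ ⟶ R₀ ⟶ S.X₂` obtained by splicing a resolution `R` of `S.X₁` with
`S.X₁ ⟶ S.X₂`; for `S` short exact it resolves `S.X₃`. -/
noncomputable def spliceComplex (R : ProjectiveResolution S.X₁) : ChainComplex C ℕ :=
  R.complex.augment (augmentation R ≫ S.f) (d_comp_augmentation_comp R S.f)

lemma exactAt_succ_spliceComplex (hS : S.ShortExact) (R : ProjectiveResolution S.X₁) (n : ℕ) :
    (spliceComplex R).ExactAt (n + 1) := by
  rw [HomologicalComplex.exactAt_iff' _ (n + 2) (n + 1) n (by simp) (by simp)]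
  cases n with
  | zero =>
    have := hS.mono_f
    let α : ShortComplex.mk _ _ (d_comp_augmentation R) ⟶
        ShortComplex.mk _ _ (d_comp_augmentation_comp R S.f) :=
      { τ₁ := 𝟙 _
        τ₂ := 𝟙 _
        τ₃ := S.f }
    exact (ShortComplex.exact_iff_of_epi_of_isIso_of_mono α).1 (exact_augmentation R)
  | succ n => exact R.exact_succ n

lemma spliceComplex_d_one_zero_comp (R : ProjectiveResolution S.X₁) :
    (spliceComplex R).d 1 0 ≫ S.g = 0 :=
  (Category.assoc (augmentation R) S.f S.g).trans
    ((congrArg (augmentation R ≫ ·) S.zero).trans comp_zero)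

lemma exact_spliceComplex_d_one_zero (hS : S.ShortExact) (R : ProjectiveResolution S.X₁) :
    (ShortComplex.mk _ _ (spliceComplex_d_one_zero_comp R)).Exact := by
  let α : ShortComplex.mk _ _ (spliceComplex_d_one_zero_comp R) ⟶ S :=
    { τ₁ := augmentation R
      τ₂ := 𝟙 S.X₂
      τ₃ := 𝟙 S.X₃
      comm₁₂ := (Category.comp_id (augmentation R ≫ S.f)).symm
      comm₂₃ := (Category.id_comp S.g).trans (Category.comp_id S.g).symm }
  have : Epi α.τ₁ := epi_augmentation R
  have : IsIso α.τ₂ := inferInstanceAs (IsIso (𝟙 S.X₂))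
  have : Mono α.τ₃ := inferInstanceAs (Mono (𝟙 S.X₃))
  exact (ShortComplex.exact_iff_of_epi_of_isIso_of_mono α).2 hS.exact

/-- The projective resolution `⋯ ⟶ R₁ ⟶ R₀ ⟶ S.X₂` of `S.X₃`, for a short exact sequence `S` with
`S.X₂` projective and a projective resolution `R` of `S.X₁`. -/
noncomputable def splice (hS : S.ShortExact) [Projective S.X₂] (R : ProjectiveResolution S.X₁) :
    ProjectiveResolution S.X₃ where
  complex := spliceComplex R
  projective
    | 0 => inferInstanceAs (Projective S.X₂)
    | n + 1 => R.projective n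
  π := (ChainComplex.toSingle₀Equiv (spliceComplex R) _).symm
    ⟨S.g, spliceComplex_d_one_zero_comp R⟩
  quasiIso :=
    have : Epi (C := C) (X := (spliceComplex R).X 0) S.g := hS.epi_g
    quasiIso_toSingle₀Equiv_symm (exact_spliceComplex_d_one_zero hS R)
      (exactAt_succ_spliceComplex hS R)

/-- If `i` is a kernel of `T.g` and `T.f = a ≫ i`, the homology of `T` is the cokernel of `a`. -/
noncomputable def homologyIsoCokernel {T : ShortComplex C} {K : C} {i : K ⟶ T.X₂}
    {wi : i ≫ T.g = 0} (hi : IsLimit (KernelFork.ofι i wi)) {a : T.X₁ ⟶ K} (ha : a ≫ i = T.f) :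
    T.homology ≅ cokernel a :=
  have lift_eq : hi.lift (KernelFork.ofι T.f T.zero) = a :=
    Fork.IsLimit.hom_ext hi ((Fork.IsLimit.lift_ι hi).trans ha.symm)
  ShortComplex.LeftHomologyData.homologyIso
    { K, i, wi, hi
      H := cokernel a
      π := cokernel.π a
      wπ := (congrArg (· ≫ cokernel.π a) lift_eq).trans (cokernel.condition a)
      hπ := CokernelCofork.isColimitOfIsColimitOfIff' (cokernelIsCokernel a) _
        fun _ φ => by rw [lift_eq] }

section

variable (k : Type w) [Ring k] [Linear k C]

instance preservesFiniteLimits_linearYoneda_obj (N : C) :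
    PreservesFiniteLimits ((linearYoneda k C).obj N) :=
  have : PreservesFiniteLimits ((linearYoneda k C).obj N ⋙ forget (ModuleCat.{v} k)) :=
    inferInstanceAs (PreservesFiniteLimits (yoneda.obj N))
  preservesFiniteLimits_of_reflects_of_preserves _ (forget (ModuleCat.{v} k))

lemma linearYoneda_map_augmentation_comp (R : ProjectiveResolution Z) (N : C) :
    ((linearYoneda k C).obj N).map (augmentation R).op ≫
      ((linearYoneda k C).obj N).map (R.complex.d 1 0).op = 0 := by
  rw [← Functor.map_comp, ← op_comp, d_comp_augmentation, op_zero, Functor.map_zero]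

/-- Dimension shifting: for `S` short exact with `S.X₂` projective, `Ext¹(S.X₃, N)` is the cokernel
of `Hom(S.X₂, N) ⟶ Hom(S.X₁, N)`. -/
noncomputable def extOneIsoCokernel [EnoughProjectives C] (hS : S.ShortExact)
    [Projective S.X₂] (N : C) :
    ((Ext k C 1).obj (.op S.X₃)).obj N ≅ cokernel (((linearYoneda k C).obj N).map S.f.op) :=
  let R := ProjectiveResolution.of S.X₁
  let F := (linearYoneda k C).obj N
  let E := (spliceComplex R).linearYonedaObj k N
  (splice hS R).isoExt 1 N ≪≫
    ShortComplex.homologyMapIso (E.isoSc' 0 1 2 (by simp) (by simp)) ≪≫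
    homologyIsoCokernel (T := E.sc' 0 1 2) (wi := linearYoneda_map_augmentation_comp k R N)
      (a := F.map S.f.op)
      (KernelFork.mapIsLimit _ (CokernelCofork.IsColimit.ofπOp (augmentation R)
        (d_comp_augmentation R) R.isColimitCokernelCofork) F)
      (F.map_comp S.f.op (augmentation R).op).symm

end

variable {k : Type w} [Ring k] [Linear k C] {D : Type u'} [Category.{v} D] [Abelian D]
  [Linear k D] (G : D ⥤ C) [G.Additive] [G.Linear k] {N : D}

/-- The isomorphism of `k`-modules `Hom(Q, N) ≅ Hom(P, G N)` given by a morphism `q : P ⟶ G Q`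
through which every morphism `P ⟶ G N` factors uniquely. -/
noncomputable def homIsoOfBijective {P : C} {Q : D} (q : P ⟶ G.obj Q)
    (hq : Function.Bijective fun f : Q ⟶ N => q ≫ G.map f) :
    ((linearYoneda k D).obj N).obj (.op Q) ≅ ((linearYoneda k C).obj (G.obj N)).obj (.op P) :=
  LinearEquiv.toModuleIso (.ofBijective (Linear.leftComp k (G.obj N) q ∘ₗ G.mapLinearMap k) hq)

/-- `Ext¹(S.X₃, G N) ≅ Ext¹(T.X₃, N)` for short exact sequences `S` and `T` with projective middle
terms, linked by morphisms `S.Xᵢ ⟶ G T.Xᵢ`, `i = 1, 2`, through which every morphism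
`S.Xᵢ ⟶ G N` factors uniquely. -/
noncomputable def extOneIsoOfBijective [EnoughProjectives C] [EnoughProjectives D]
    {T : ShortComplex D} (hS : S.ShortExact) (hT : T.ShortExact)
    [Projective S.X₂] [Projective T.X₂] {q₁ : S.X₁ ⟶ G.obj T.X₁} {q₂ : S.X₂ ⟶ G.obj T.X₂}
    (comm : S.f ≫ q₂ = q₁ ≫ G.map T.f)
    (hq₁ : Function.Bijective fun f : T.X₁ ⟶ N => q₁ ≫ G.map f)
    (hq₂ : Function.Bijective fun f : T.X₂ ⟶ N => q₂ ≫ G.map f) :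
    ((Ext k C 1).obj (.op S.X₃)).obj (G.obj N) ≅ ((Ext k D 1).obj (.op T.X₃)).obj N :=
  extOneIsoCokernel k hS (G.obj N) ≪≫
    (cokernel.mapIso _ _ (homIsoOfBijective G q₂ hq₂) (homIsoOfBijective G q₁ hq₁) (by
      ext (f : T.X₂ ⟶ N)
      change q₁ ≫ G.map (T.f ≫ f) = S.f ≫ q₂ ≫ G.map f
      rw [G.map_comp, ← Category.assoc, ← comm, Category.assoc])).symm ≪≫
    (extOneIsoCokernel k hT N).symm

end ExtOne

section Reduction

variable {R S : Type*} [Ring R] [Ring S] {φ : R →+* S} {P Q N : Type*} [AddCommGroup P]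
  [Module R P] [AddCommGroup Q] [Module S Q] [AddCommGroup N] [Module S N]

lemma ker_smul_top_le_ker (g : P →ₛₗ[φ] N) :
    RingHom.ker φ • (⊤ : Submodule R P) ≤ LinearMap.ker g :=
  Submodule.smul_le.2 fun r hr x _ => by
    rw [LinearMap.mem_ker, map_smulₛₗ, RingHom.mem_ker.1 hr, zero_smul]

lemma exists_comp_eq_of_ker_le_ker [RingHomSurjective φ] {q : P →ₛₗ[φ] Q}
    (hq : Function.Surjective q) {g : P →ₛₗ[φ] N} (h : LinearMap.ker q ≤ LinearMap.ker g) :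
    ∃ f : Q →ₗ[S] N, f.comp q = g := by
  let f : Q →+ N := q.toAddMonoidHom.liftOfSurjective hq ⟨g.toAddMonoidHom, h⟩
  have hf (x : P) : f (q x) = g x := AddMonoidHom.liftOfRightInverse_comp_apply _ _ _ _ x
  refine ⟨{ f with map_smul' := fun s y => ?_ }, LinearMap.ext hf⟩
  obtain ⟨r, rfl⟩ := φ.surjective s
  obtain ⟨x, rfl⟩ := hq y
  change f (φ r • q x) = φ r • f (q x)
  rw [← map_smulₛₗ, hf, hf, map_smulₛₗ]

/-- The semilinear map `q` exhibits `Q` as the reduction `P / I P` of `P` modulo `I = ker φ`. The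
inclusion `I P ≤ ker q` holds for every semilinear `q`. -/
structure IsReduction (q : P →ₛₗ[φ] Q) : Prop where
  surjective : Function.Surjective q
  ker_le : LinearMap.ker q ≤ RingHom.ker φ • (⊤ : Submodule R P)

namespace IsReduction

lemma bijective_comp [RingHomSurjective φ] {q : P →ₛₗ[φ] Q} (hq : IsReduction q) :
    Function.Bijective fun f : Q →ₗ[S] N => f.comp q :=
  ⟨fun _ _ => (LinearMap.cancel_right hq.surjective).1,
    fun g => exists_comp_eq_of_ker_le_ker hq.surjective (hq.ker_le.trans (ker_smul_top_le_ker g))⟩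

lemma submoduleComap {q : P →ₛₗ[φ] Q} (hq : IsReduction q)
    (hφ : IsIdempotentElem (RingHom.ker φ)) (L : Submodule S Q) :
    IsReduction (q.submoduleComap L) where
  surjective := LinearMap.submoduleComap_surjective_of_surjective q L hq.surjective
  ker_le := by
    have map_smul_top : (RingHom.ker φ • (⊤ : Submodule R (L.comap q))).map (L.comap q).subtype =
        RingHom.ker φ • L.comap q := by
      rw [Submodule.map_smul'', Submodule.map_top, Submodule.range_subtype]
    have ker_le : LinearMap.ker q ≤ RingHom.ker φ • L.comap q :=
      calc LinearMap.ker q ≤ RingHom.ker φ • ⊤ := hq.ker_le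
        _ = RingHom.ker φ • RingHom.ker φ • ⊤ := by rw [← Submodule.smul_assoc, smul_eq_mul, hφ.eq]
        _ ≤ RingHom.ker φ • L.comap q := Submodule.smul_mono le_rfl <|
          (ker_smul_top_le_ker q).trans (LinearMap.ker_le_comap q)
    rw [← Submodule.map_le_map_iff_of_injective (L.comap q).injective_subtype, map_smul_top]
    refine le_trans ?_ ker_le
    rintro _ ⟨x, hx, rfl⟩
    exact congrArg Subtype.val hx

lemma finsupp_mapRange [RingHomSurjective φ] (ι : Type*) :
    IsReduction (Finsupp.mapRange.linearMap (α := ι) φ.toSemilinearMap) where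
  surjective := Finsupp.mapRange_surjective _ (map_zero φ) φ.surjective
  ker_le x hx := by
    rw [← x.sum_single]
    refine Submodule.sum_mem _ fun i _ => ?_
    have hi : x i ∈ RingHom.ker φ := DFunLike.congr_fun hx i
    rw [← mul_one (x i), ← smul_eq_mul, ← Finsupp.smul_single]
    exact Submodule.smul_mem_smul hi Submodule.mem_top

end IsReduction

end Reduction

section Modules

open scoped ModuleCat.Algebra

universe w u

variable {k : Type w} [CommRing k] {R S : Type u} [Ring R] [Ring S] [Algebra k R] [Algebra k S]

lemma bijective_comp_restrictScalars_map {φ : R →+* S} [RingHomSurjective φ] {P Q : Type u}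
    [AddCommGroup P] [Module R P] [AddCommGroup Q] [Module S Q] {q : P →ₛₗ[φ] Q}
    (hq : IsReduction q) (N : ModuleCat.{u} S) :
    Function.Bijective fun f : ModuleCat.of S Q ⟶ N =>
      ModuleCat.semilinearMapAddEquiv φ (.of R P) (.of S Q) q ≫
        (ModuleCat.restrictScalars φ).map f :=
  (ModuleCat.semilinearMapAddEquiv φ (.of R P) N).bijective.comp
    (hq.bijective_comp.comp ModuleCat.homEquiv.bijective)

theorem nonempty_ext_one_restrictScalars_iso (φ : R →ₐ[k] S) (hφ : Function.Surjective φ)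
    (hI : IsIdempotentElem (RingHom.ker φ)) (M N : ModuleCat.{u} S) :
    Nonempty
      (((Ext k (ModuleCat.{u} R) 1).obj (.op ((ModuleCat.restrictScalars φ.toRingHom).obj M))).obj
          ((ModuleCat.restrictScalars φ.toRingHom).obj N) ≅
        ((Ext k (ModuleCat.{u} S) 1).obj (.op M)).obj N) := by
  have : RingHomSurjective φ.toRingHom := ⟨hφ⟩
  let q : (M →₀ R) →ₛₗ[φ.toRingHom] (M →₀ S) :=
    Finsupp.mapRange.linearMap φ.toRingHom.toSemilinearMap
  have hq : IsReduction q := .finsupp_mapRange M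
  let t : (M →₀ S) →ₗ[S] M := Finsupp.linearCombination S id
  have ht : Function.Surjective t := Finsupp.linearCombination_id_surjective S M
  let p : (M →₀ R) →ₗ[R] (ModuleCat.restrictScalars φ.toRingHom).obj M :=
    (ModuleCat.semilinearMapAddEquiv φ.toRingHom (.of R (M →₀ R)) M (t.comp q)).hom
  have hp : Function.Surjective p := ht.comp hq.surjective
  have : Projective p.shortComplexKer.X₂ :=
    ModuleCat.projective_of_categoryTheory_projective (.of R (M →₀ R))
  have : Projective t.shortComplexKer.X₂ :=
    ModuleCat.projective_of_categoryTheory_projective (.of S (M →₀ S))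
  exact ⟨extOneIsoOfBijective (ModuleCat.restrictScalars φ.toRingHom)
    (LinearMap.shortExact_shortComplexKer hp) (LinearMap.shortExact_shortComplexKer ht) rfl
    (bijective_comp_restrictScalars_map (hq.submoduleComap hI (LinearMap.ker t)) N)
    (bijective_comp_restrictScalars_map hq N)⟩

lemma isIdempotentElem_ker_op {A B : Type*} [Ring A] [Ring B] [Algebra k A] [Algebra k B]
    {π : A →ₐ[k] B}
    (h : Submodule.span k {y : A | ∃ a ∈ RingHom.ker π, ∃ b ∈ RingHom.ker π, y = a * b} =
      Submodule.restrictScalars k (RingHom.ker π)) :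
    IsIdempotentElem (RingHom.ker (AlgHom.op π)) := by
  let J := RingHom.ker (AlgHom.op π)
  have op_mem {a : A} (ha : a ∈ RingHom.ker π) : MulOpposite.op a ∈ J :=
    congrArg MulOpposite.op ha
  have le : Submodule.restrictScalars k (RingHom.ker π) ≤
      ((J * J).restrictScalars k).comap (MulOpposite.opLinearEquiv k).toLinearMap := by
    rw [← h, Submodule.span_le]
    rintro _ ⟨a, ha, b, hb, rfl⟩
    exact Ideal.mul_mem_mul (op_mem hb) (op_mem ha)
  exact le_antisymm Ideal.mul_le_left fun x hx => le (congrArg MulOpposite.unop hx)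

theorem stmt3_general (k : Type w) [CommRing k] (A B : Type u) [Ring A] [Ring B]
    [Algebra k A] [Algebra k B]
    (π : A →ₐ[k] B) (hsurj : Function.Surjective π)
    (hidem : Submodule.span k {y : A | ∃ a ∈ RingHom.ker π, ∃ b ∈ RingHom.ker π, y = a * b}
      = Submodule.restrictScalars k (RingHom.ker π))
    (M N : ModuleCat.{u} Bᵐᵒᵖ) :
    Nonempty
      ((((Ext k (ModuleCat.{u} Aᵐᵒᵖ) 1).obj
            (Opposite.op ((ModuleCat.restrictScalars (RingHom.op π.toRingHom)).obj M))).obj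
          ((ModuleCat.restrictScalars (RingHom.op π.toRingHom)).obj N)) ≅
        (((Ext k (ModuleCat.{u} Bᵐᵒᵖ) 1).obj (Opposite.op M)).obj N)) :=
  nonempty_ext_one_restrictScalars_iso (AlgHom.op π)
    ((MulOpposite.op_surjective.comp hsurj).comp MulOpposite.unop_surjective)
    (isIdempotentElem_ker_op hidem) M N

end Modules

/-- if `I` is an idempotent two-sided ideal of a `k`-algebra `A` (realized
here as the kernel of a surjective `k`-algebra map `π : A → B`, so that `B ≅ A/I`), then
for right `A/I`-modules `M, N` (i.e. `B`-modules, viewed as `A`-modules by restriction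
along `π`) with `M` finitely generated, `Ext¹_A(M, N) ≅ Ext¹_{A/I}(M, N)`. -/
theorem stmt3 (k : Type) [Field k] (A B : Type) [Ring A] [Ring B]
    [Algebra k A] [Algebra k B]
    (π : A →ₐ[k] B) (hsurj : Function.Surjective π)
    (hidem : Submodule.span k {y : A | ∃ a ∈ RingHom.ker π, ∃ b ∈ RingHom.ker π, y = a * b}
      = Submodule.restrictScalars k (RingHom.ker π))
    (M N : ModuleCat Bᵐᵒᵖ) (hM : Module.Finite Bᵐᵒᵖ M) :
    Nonempty
      ((((Ext k (ModuleCat Aᵐᵒᵖ) 1).obj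
            (Opposite.op ((ModuleCat.restrictScalars (RingHom.op π.toRingHom)).obj M))).obj
          ((ModuleCat.restrictScalars (RingHom.op π.toRingHom)).obj N)) ≅
        (((Ext k (ModuleCat Bᵐᵒᵖ) 1).obj (Opposite.op M)).obj N)) :=
  stmt3_general k A B π hsurj hidem M N
end

section
/- Let k be a field, A an associative unital k-algebra, e ∈ A an idempotent, and B a unital subalgebra of e·A·e whose identity element is e. Let M be a right B-module and N a right A-module. If eA = {e·a : a ∈ A} is flat as a left B-module, then for every n ≥ 0 there is an isomorphism Ext^n_A(M ⊗_B eA, N) ≅ Ext^n_B(M, N·e), where N·e = {n·e : n ∈ N} is a right B-module via the B-action inherited from A. -/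
/-!
Tensoring with a bimodule `E` is left adjoint to `Hom_A(E, -)`, and for `E = eA` evaluation at `e`
identifies the latter with `N ↦ N·e`. An adjunction identifies the complexes
`Hom_A(P ⊗_B E, N)` and `Hom_B(P, Hom_A(E, N))`, so everything follows once `- ⊗_B E` carries
projective resolutions to projective resolutions. Both halves of that are read off the right
adjoint: it preserves epimorphisms because `eA` is a direct summand of `A`, hence its left adjoint
preserves projectives; and it preserves injectives because `eA` is flat over `B` (Lambek's
criterion, proved with Baer's test), hence its left adjoint preserves monomorphisms.

No construction of the tensor product is needed: `Hom_A(E, -)` preserves limits, so it has a left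
adjoint by the special adjoint functor theorem, and the universal property of `M ⊗_B E` says that
it corepresents the same functor as the value of that left adjoint at `M`.
-/

open CategoryTheory MulOpposite ModuleCat

section Infra

variable (k : Type) [Field k] (A : Type) [Ring A] [Algebra k A]
variable (B : Type) [Ring B] [Algebra k B]

/-- The right ideal `eA`, as a `k`-subspace of `A`. -/
noncomputable def eASub (e : A) : Submodule k A := LinearMap.range (LinearMap.mulLeft k e)

/-- The left ideal `Ae`, as a `k`-subspace of `A`. -/
noncomputable def AeSub (e : A) : Submodule k A := LinearMap.range (LinearMap.mulRight k e)

/-- The subspace `N·ε` of a right `A`-module `N`. -/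
noncomputable def NeSub (e : A) (N : ModuleCat Aᵐᵒᵖ) : Submodule k N :=
  Submodule.span k {v : N | ∃ w : N, v = op e • w}

variable {k A B}

theorem op_smul_comm_k (W : ModuleCat Aᵐᵒᵖ) (r : Aᵐᵒᵖ) (c : k) (v : W) :
    r • (c • v) = c • (r • v) := by
  rw [algebra_compatible_smul Aᵐᵒᵖ c v, algebra_compatible_smul Aᵐᵒᵖ c (r • v),
    smul_smul, smul_smul, Algebra.commutes]

theorem smul_e_mem_NeSub {e : A} (a : A) (N : ModuleCat Aᵐᵒᵖ) (v : N) :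
    op (a * e) • v ∈ NeSub k A e N := by
  apply Submodule.subset_span
  exact ⟨op a • v, by rw [smul_smul, ← op_mul]⟩

theorem e_smul_of_mem_NeSub {e : A} (he : e * e = e) (N : ModuleCat Aᵐᵒᵖ) {v : N}
    (hv : v ∈ NeSub k A e N) : op e • v = v := by
  induction hv using Submodule.span_induction with
  | mem w hw => obtain ⟨m, rfl⟩ := hw; rw [smul_smul, ← op_mul, he]
  | zero => rw [smul_zero]
  | add a b _ _ ha hb => rw [smul_add, ha, hb]
  | smul c a _ ha => rw [op_smul_comm_k, ha]

variable (e : A) (he : e * e = e) (ι : B →ₗ[k] A)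

theorem iota_mem_corner (hmul : ∀ x y : B, ι (x * y) = ι x * ι y) (hone : ι 1 = e)
    (b : B) : ι b = e * ι b ∧ ι b = ι b * e := by
  constructor
  · rw [← hone, ← hmul, one_mul]
  · rw [← hone, ← hmul, mul_one]

variable (hmul : ∀ x y : B, ι (x * y) = ι x * ι y) (hone : ι 1 = e)

/-- The right `B`-action on `N·e`, as a ring homomorphism `Bᵐᵒᵖ → End(N·e)`. -/
noncomputable def NeHom (N : ModuleCat Aᵐᵒᵖ) : Bᵐᵒᵖ →+* Module.End k ↥(NeSub k A e N) where
  toFun b :=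
    { toFun := fun v => ⟨op (ι (unop b)) • v.1, by
        rw [(iota_mem_corner e ι hmul hone (unop b)).2]
        exact smul_e_mem_NeSub _ N v.1⟩
      map_add' := fun x y => Subtype.ext (by
        show op _ • ((x : N) + (y : N)) = op _ • (x : N) + op _ • (y : N)
        rw [smul_add])
      map_smul' := fun c x => Subtype.ext (by
        show op _ • ((c • x : ↥(NeSub k A e N)) : N) = c • (op _ • (x : N))
        rw [Submodule.coe_smul, op_smul_comm_k]) }
  map_one' := by
    ext v
    show op (ι 1) • (v : N) = (v : N)
    rw [hone]
    exact e_smul_of_mem_NeSub he N v.2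
  map_mul' x y := by
    ext v
    show op (ι (unop y * unop x)) • (v : N)
      = op (ι (unop x)) • (op (ι (unop y)) • (v : N))
    rw [hmul, smul_smul, ← op_mul]
  map_zero' := by
    ext v
    show op (ι 0) • (v : N) = 0
    rw [map_zero, op_zero, zero_smul]
  map_add' x y := by
    ext v
    show op (ι (unop x + unop y)) • (v : N)
      = op (ι (unop x)) • (v : N) + op (ι (unop y)) • (v : N)
    rw [map_add, MulOpposite.op_add, add_smul]

/-- The right `B`-module structure on `N·e` (restriction along `B ⊆ eAe`). -/
noncomputable def NeModule (N : ModuleCat Aᵐᵒᵖ) : Module Bᵐᵒᵖ ↥(NeSub k A e N) :=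
  Module.compHom _ (NeHom e he ι hmul hone N)

/-- The left `B`-action on `eA`, as a ring homomorphism `B → End(eA)`. -/
noncomputable def eAHom : B →+* Module.End k ↥(eASub k A e) where
  toFun b :=
    { toFun := fun x => ⟨ι b * x.1, by
        obtain ⟨c, hc⟩ := x.2
        refine ⟨ι b * x.1, ?_⟩
        show e * (ι b * (x : A)) = ι b * (x : A)
        rw [← mul_assoc, ← (iota_mem_corner e ι hmul hone b).1]⟩
      map_add' := fun x y => Subtype.ext (by
        show ι b * ((x : A) + (y : A)) = ι b * (x : A) + ι b * (y : A)
        rw [mul_add])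
      map_smul' := fun c x => Subtype.ext (by
        show ι b * (c • (x : A)) = c • (ι b * (x : A))
        rw [mul_smul_comm]) }
  map_one' := by
    ext x
    show ι 1 * (x : A) = (x : A)
    obtain ⟨c, hc⟩ := x.2
    rw [hone, ← hc]
    show e * (LinearMap.mulLeft k e c) = _
    show e * (e * c) = e * c
    rw [← mul_assoc, he]
  map_mul' a b := by
    ext x
    show ι (a * b) * (x : A) = ι a * (ι b * (x : A))
    rw [hmul, mul_assoc]
  map_zero' := by
    ext x
    show ι 0 * (x : A) = 0
    rw [map_zero, zero_mul]
  map_add' a b := by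
    ext x
    show ι (a + b) * (x : A) = ι a * (x : A) + ι b * (x : A)
    rw [map_add, add_mul]

/-- The left `B`-module structure on `eA`. -/
noncomputable def eAModule : Module B ↥(eASub k A e) :=
  Module.compHom _ (eAHom e he ι hmul hone)

end Infra

section ExtAdjunction

universe v u₁ u₂

variable (k : Type*) [Ring k] {C : Type u₁} {D : Type u₂} [Category.{v} C] [Category.{v} D]
  [Abelian C] [Abelian D] [Linear k C] [Linear k D] {F : C ⥤ D} {G : D ⥤ C}
  [G.Additive] [G.Linear k]

/-- The hom-set bijection of an adjunction whose right adjoint is `k`-linear, as a `k`-linear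
equivalence. -/
def adjunctionHomLinearEquiv (adj : F ⊣ G) (X : C) (Y : D) :
    (F.obj X ⟶ Y) ≃ₗ[k] (X ⟶ G.obj Y) where
  __ := adj.homEquiv X Y
  map_add' f g := by simp [Adjunction.homEquiv_unit]
  map_smul' c f := by simp [Adjunction.homEquiv_unit]

variable [EnoughProjectives C] [EnoughProjectives D]

theorem nonempty_ext_iso_of_adjunction [F.Additive] [F.PreservesHomology]
    [F.PreservesProjectiveObjects] (adj : F ⊣ G) (X : C) (Y : D) (n : ℕ) :
    Nonempty (((Ext k D n).obj (.op (F.obj X))).obj Y ≅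
      ((Ext k C n).obj (.op X)).obj (G.obj Y)) := by
  let P := projectiveResolution X
  let homIso : (F.mapProjectiveResolution P).complex.linearYonedaObj k Y ≅
      P.complex.linearYonedaObj k (G.obj Y) :=
    HomologicalComplex.Hom.isoOfComponents
      (fun i => (adjunctionHomLinearEquiv k adj (P.complex.X i) Y).toModuleIso) fun i j _ => by
        ext f
        exact (adj.homEquiv_naturality_left (P.complex.d j i) f).symm
  exact ⟨(F.mapProjectiveResolution P).isoExt n Y ≪≫
    (HomologicalComplex.homologyFunctor _ _ n).mapIso homIso ≪≫ (P.isoExt n (G.obj Y)).symm⟩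

theorem nonempty_ext_iso_of_adjunction_of_preservesInjectiveObjects [EnoughInjectives D]
    [G.PreservesEpimorphisms] [G.PreservesInjectiveObjects] (adj : F ⊣ G) (X : C) (Y : D) (n : ℕ) :
    Nonempty (((Ext k D n).obj (.op (F.obj X))).obj Y ≅
      ((Ext k C n).obj (.op X)).obj (G.obj Y)) := by
  have := adj.left_adjoint_additive
  have := Functor.preservesMonomorphisms_of_adjunction_of_preservesInjectiveObjects adj
  have := Functor.preservesProjectiveObjects_of_adjunction_of_preservesEpimorphisms adj
  have := adj.leftAdjoint_preservesColimits
  have := F.preservesHomology_of_preservesMonos_and_cokernels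
  exact nonempty_ext_iso_of_adjunction k adj X Y n

end ExtAdjunction

section HomFunctor

universe u

variable (R S E : Type u) [Ring R] [Ring S] [AddCommGroup E] [Module R E] [Module S E]
  [SMulCommClass R S E]

/-- The functor `Hom_S(E, -)` of an `R`-`S`-bimodule `E`, where `Rᵐᵒᵖ` acts on `Hom_S(E, N)` by
precomposition with the action of `R` on `E`. The action of `S` is written on the left, so that
right modules over a ring `A` are covered by `S = Aᵐᵒᵖ`. -/
noncomputable def homFunctor : ModuleCat.{u} S ⥤ ModuleCat.{u} Rᵐᵒᵖ :=
  preadditiveCoyonedaObj (of S E) ⋙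
    restrictScalars
      (RingHom.op ((endRingEquiv (of S E)).symm.toRingHom.comp (Module.toModuleEnd S E)))

variable {R S E}

/-- The elements of `Hom_S(E, N)`, as `S`-linear maps. -/
def homFunctorEquiv (N : ModuleCat.{u} S) : (homFunctor R S E).obj N ≃+ (E →ₗ[S] N) :=
  homAddEquiv

theorem homFunctorEquiv_smul {N : ModuleCat.{u} S} (r : Rᵐᵒᵖ) (f : (homFunctor R S E).obj N)
    (x : E) : homFunctorEquiv N (r • f) x = homFunctorEquiv N f (unop r • x) := rfl

theorem homFunctorEquiv_map {N N' : ModuleCat.{u} S} (g : N ⟶ N') (f : (homFunctor R S E).obj N) :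
    homFunctorEquiv N' ((homFunctor R S E).map g f) = g.hom ∘ₗ homFunctorEquiv N f := rfl

theorem homFunctorEquiv_algebra_smul {k : Type u} [Field k] [Algebra k R] [Algebra k S] [Module k E]
    [IsScalarTower k R E] [IsScalarTower k S E] {N : ModuleCat.{u} S} (c : k)
    (f : (homFunctor R S E).obj N) (x : E) :
    homFunctorEquiv N (c • f) x = c • homFunctorEquiv N f x := by
  change homFunctorEquiv N (op (algebraMap k R c) • f) x = _
  rw [homFunctorEquiv_smul, unop_op, algebraMap_smul, LinearMap.map_smul_of_tower]

variable (R S E)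

instance : (homFunctor R S E).Additive := by
  unfold homFunctor
  infer_instance

instance (k : Type u) [Field k] [Algebra k R] [Algebra k S] [Module k E] [IsScalarTower k R E]
    [IsScalarTower k S E] : (homFunctor R S E).Linear k where
  map_smul {N N'} g c := by
    ext f
    refine (homFunctorEquiv N').injective (LinearMap.ext fun x => ?_)
    exact (homFunctorEquiv_algebra_smul c ((homFunctor R S E).map g f) x).symm

instance : (homFunctor R S E).IsRightAdjoint :=
  have : Limits.PreservesLimits (homFunctor R S E ⋙ forget _) :=
    inferInstanceAs (Limits.PreservesLimits (coyoneda.obj (.op (of S E))))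
  have : Limits.PreservesLimits (homFunctor R S E) :=
    Limits.preservesLimits_of_reflects_of_preserves _ (forget _)
  isRightAdjoint_of_preservesLimits_of_isCoseparating.{u} (isCoseparator_coseparator _) _

instance [Module.Projective S E] : (homFunctor R S E).PreservesEpimorphisms where
  preserves {N N'} p hp := by
    rw [ModuleCat.epi_iff_surjective] at hp ⊢
    intro f
    obtain ⟨g, hg⟩ := Module.projective_lifting_property p.hom (homFunctorEquiv N' f) hp
    refine ⟨(homFunctorEquiv N).symm g, (homFunctorEquiv N').injective ?_⟩
    rw [homFunctorEquiv_map, AddEquiv.apply_symm_apply, hg]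

end HomFunctor

section EquationalFlatness

universe u

variable {R S E : Type u} [Ring R] [Ring S] [AddCommGroup E] [Module R E] [Module S E]

variable (R E) in
/-- Flatness of a left module over a possibly noncommutative ring, in the form of the equational
criterion: every linear relation in `E` is a consequence of relations in `R`. Mathlib's
`Module.Flat` is only available over commutative rings. -/
def IsEquationallyFlat : Prop :=
  ∀ (n : ℕ) (b : Fin n → R) (x : Fin n → E), ∑ i, b i • x i = 0 →
    ∃ (m : ℕ) (c : Fin n → Fin m → R) (y : Fin m → E),
      (∀ i, x i = ∑ j, c i j • y j) ∧ ∀ j, ∑ i, b i * c i j = 0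

namespace IsEquationallyFlat

theorem exists_factorization (hE : IsEquationallyFlat R E) {ι : Type*} [Fintype ι] {b : ι → R}
    {x : ι → E} (h : ∑ i, b i • x i = 0) :
    ∃ (m : ℕ) (c : ι → Fin m → R) (y : Fin m → E),
      (∀ i, x i = ∑ j, c i j • y j) ∧ ∀ j, ∑ i, b i * c i j = 0 := by
  let q := Fintype.equivFin ι
  obtain ⟨m, c, y, hx, hc⟩ := hE _ (b ∘ q.symm) (x ∘ q.symm)
    ((Equiv.sum_comp q.symm fun i => b i • x i).trans h)
  refine ⟨m, fun i => c (q i), y, fun i => ?_, fun j => ?_⟩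
  · simpa using hx (q i)
  · simpa [← hc j] using Equiv.sum_comp q fun i => b (q.symm i) * c i j

theorem sum_apply_eq_zero (hE : IsEquationallyFlat R E) {V : Type*} [AddCommGroup V]
    {I : Ideal Rᵐᵒᵖ} (γ : I →+ E →+ V)
    (hγ : ∀ (r : R) (b : I) (x : E), γ (op r • b) x = γ b (r • x)) {ι : Type*} [Fintype ι]
    {b : ι → I} {x : ι → E} (h : ∑ i, unop (b i : Rᵐᵒᵖ) • x i = 0) : ∑ i, γ (b i) (x i) = 0 := by
  obtain ⟨m, c, y, hx, hc⟩ := hE.exists_factorization h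
  have hbc (j : Fin m) : ∑ i, op (c i j) • b i = 0 :=
    Subtype.ext (unop_injective (by simpa using hc j))
  calc ∑ i, γ (b i) (x i)
    _ = ∑ i, ∑ j, γ (op (c i j) • b i) (y j) := by simp only [hx, map_sum, hγ]
    _ = ∑ j, γ (∑ i, op (c i j) • b i) (y j) := by
      rw [Finset.sum_comm]
      simp only [map_sum, AddMonoidHom.finsetSum_apply]
    _ = 0 := by simp only [hbc, map_zero, AddMonoidHom.zero_apply, Finset.sum_const_zero]

end IsEquationallyFlat

theorem exists_comp_eq_of_ker_le_ker_s6 {X Q : Type u} [AddCommGroup X] [Module S X] [AddCommGroup Q]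
    [Module S Q] [Module.Injective S Q] (Φ : X →ₗ[S] E) (Ψ : X →ₗ[S] Q)
    (h : LinearMap.ker Φ ≤ LinearMap.ker Ψ) : ∃ g : E →ₗ[S] Q, g ∘ₗ Φ = Ψ := by
  obtain ⟨g, hg⟩ := Module.Injective.out ((LinearMap.ker Φ).liftQ Φ le_rfl)
    (LinearMap.ker_eq_bot.mp (Submodule.ker_liftQ_eq_bot _ _ _ le_rfl))
    ((LinearMap.ker Φ).liftQ Ψ h)
  exact ⟨g, LinearMap.ext fun x => hg (Submodule.Quotient.mk x)⟩

namespace IsEquationallyFlat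

variable [SMulCommClass R S E]

-- Flatness makes `I ⊗ E → IE ⊆ E` injective, so `γ` is a map on `IE`, and `Q` is injective.
theorem exists_apply_smul_eq (hE : IsEquationallyFlat R E) {Q : Type u} [AddCommGroup Q]
    [Module S Q] [Module.Injective S Q] {I : Ideal Rᵐᵒᵖ} (γ : I →+ E →ₗ[S] Q)
    (hγ : ∀ (r : R) (b : I) (x : E), γ (op r • b) x = γ b (r • x)) :
    ∃ h : E →ₗ[S] Q, ∀ (b : I) (x : E), h (unop (b : Rᵐᵒᵖ) • x) = γ b x := by
  let Φ : (I →₀ E) →ₗ[S] E := Finsupp.lsum ℕ fun b => Module.toModuleEnd S E (unop (b : Rᵐᵒᵖ))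
  let Ψ : (I →₀ E) →ₗ[S] Q := Finsupp.lsum ℕ γ
  have hker : LinearMap.ker Φ ≤ LinearMap.ker Ψ := fun s hs => by
    have hs : ∑ b ∈ s.support, unop (b : Rᵐᵒᵖ) • s b = 0 := hs
    change ∑ b ∈ s.support, γ b (s b) = 0
    rw [← Finset.sum_coe_sort] at hs ⊢
    exact hE.sum_apply_eq_zero (LinearMap.toAddMonoidHom'.comp γ) hγ hs
  obtain ⟨h, hh⟩ := exists_comp_eq_of_ker_le_ker_s6 Φ Ψ hker
  refine ⟨h, fun b x => ?_⟩
  simpa [Φ, Ψ] using LinearMap.congr_fun hh (Finsupp.single b x)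

theorem baer_homFunctor_obj (hE : IsEquationallyFlat R E) (Q : ModuleCat.{u} S)
    [Module.Injective S Q] : Module.Baer Rᵐᵒᵖ ((homFunctor R S E).obj Q) := fun I g => by
  obtain ⟨h, hh⟩ := hE.exists_apply_smul_eq
    ((homFunctorEquiv Q).toAddMonoidHom.comp g.toAddMonoidHom)
    (fun r b x => LinearMap.congr_fun (congrArg (homFunctorEquiv Q) (g.map_smul (op r) b)) x)
  exact ⟨LinearMap.toSpanSingleton Rᵐᵒᵖ _ ((homFunctorEquiv Q).symm h), fun b hb =>
    (homFunctorEquiv Q).injective (LinearMap.ext (hh ⟨b, hb⟩))⟩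

theorem homFunctor_preservesInjectiveObjects (hE : IsEquationallyFlat R E) :
    (homFunctor R S E).PreservesInjectiveObjects where
  injective_obj {Q} _ := by
    have := Module.injective_module_of_injective_object S Q
    have := (hE.baer_homFunctor_obj Q).injective
    exact Module.injective_object_of_injective_module Rᵐᵒᵖ ((homFunctor R S E).obj Q)

end IsEquationallyFlat

end EquationalFlatness

section BimoduleTensor

universe u

variable {k R S : Type u} [CommRing k] [Ring R] [Ring S] {E M T V : Type u} [AddCommGroup E]
  [Module k E] [Module R E] [Module S E] [AddCommGroup M] [Module k M] [Module Rᵐᵒᵖ M]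
  [AddCommGroup T] [Module k T] [Module S T] [AddCommGroup V] [Module k V]

variable (R S) in
/-- The `S`-module `T` is the tensor product `M ⊗_R E` of a right `R`-module `M` with an
`R`-`S`-bimodule `E` (with `S` acting on the left), via the bilinear map `β m x = m ⊗ x`:
`β` is `S`-linear in `x` and is universal among `R`-balanced `k`-bilinear maps. -/
structure IsBimoduleTensor (β : M →ₗ[k] E →ₗ[k] T) : Prop where
  balanced (r : R) (m : M) (x : E) : β (op r • m) x = β m (r • x)
  map_smul_right (s : S) (m : M) (x : E) : β m (s • x) = s • β m x
  existsUnique_lift (V : Type u) [AddCommGroup V] [Module k V] (γ : M →ₗ[k] E →ₗ[k] V) :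
    (∀ (r : R) (m : M) (x : E), γ (op r • m) x = γ m (r • x)) →
      ∃! g : T →ₗ[k] V, ∀ m x, g (β m x) = γ m x

namespace IsBimoduleTensor

variable {β : M →ₗ[k] E →ₗ[k] T}

theorem hom_ext (hβ : IsBimoduleTensor R S β) {g g' : T →ₗ[k] V}
    (h : ∀ m x, g (β m x) = g' (β m x)) : g = g' :=
  (hβ.existsUnique_lift V (β.compr₂ g') fun r m x => congrArg g' (hβ.balanced r m x)).unique h
    fun _ _ => rfl

variable [Algebra k S] [IsScalarTower k S T] [Module S V] [IsScalarTower k S V]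

theorem map_smul_of_apply (hβ : IsBimoduleTensor R S β) {g : T →ₗ[k] V}
    (hg : ∀ (s : S) m x, g (β m (s • x)) = s • g (β m x)) (s : S) (t : T) :
    g (s • t) = s • g t := by
  have : g ∘ₗ Algebra.lsmul k k T s = Algebra.lsmul k k V s ∘ₗ g := hβ.hom_ext fun m x => by
    simpa only [hβ.map_smul_right] using! hg s m x
  exact LinearMap.congr_fun this t

theorem exists_linear_lift (hβ : IsBimoduleTensor R S β) (γ : M →ₗ[k] E →ₗ[k] V)
    (hγ : ∀ (r : R) m x, γ (op r • m) x = γ m (r • x))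
    (hγS : ∀ (s : S) m x, γ m (s • x) = s • γ m x) :
    ∃ g : T →ₗ[S] V, ∀ m x, g (β m x) = γ m x := by
  obtain ⟨g, hg, -⟩ := hβ.existsUnique_lift V γ hγ
  exact ⟨{ g with map_smul' := hβ.map_smul_of_apply fun s m x => by rw [hg, hg, hγS] }, hg⟩

end IsBimoduleTensor

end BimoduleTensor

section TensorHomAdjunction

universe u

variable {k R S E : Type u} [Field k] [Ring R] [Ring S] [AddCommGroup E] [Module k E]
  [Module R E] [Module S E] [Algebra k R] [Algebra k S] [SMulCommClass R S E]
  {M : ModuleCat.{u} Rᵐᵒᵖ} {T : ModuleCat.{u} S} {β : M →ₗ[k] E →ₗ[k] T}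

namespace IsBimoduleTensor

/-- The transpose `m ↦ (x ↦ h (m ⊗ x))` of an `S`-linear map `h` out of `M ⊗_R E`. -/
noncomputable def curry (hβ : IsBimoduleTensor R S β) {N : ModuleCat.{u} S} (h : T ⟶ N) :
    M ⟶ (homFunctor R S E).obj N :=
  ofHom (Y := (homFunctor R S E).obj N)
    { toFun m := (homFunctorEquiv N).symm
        (h.hom ∘ₗ { β m with map_smul' s := hβ.map_smul_right s m })
      map_add' m m' := (homFunctorEquiv N).injective <| LinearMap.ext fun x =>
        (congrArg h (LinearMap.congr_fun (β.map_add m m') x)).trans (map_add h.hom _ _)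
      map_smul' r m := (homFunctorEquiv N).injective <| LinearMap.ext fun x =>
        congrArg h (hβ.balanced (unop r) m x) }

theorem homFunctorEquiv_curry (hβ : IsBimoduleTensor R S β) {N : ModuleCat.{u} S} (h : T ⟶ N)
    (m : M) (x : E) : homFunctorEquiv N (hβ.curry h m) x = h (β m x) := rfl

theorem curry_injective (hβ : IsBimoduleTensor R S β) (N : ModuleCat.{u} S) :
    Function.Injective (hβ.curry (N := N)) := fun h h' heq => by
  have : h.hom.restrictScalars k = h'.hom.restrictScalars k := hβ.hom_ext fun m x => by
    change h (β m x) = h' (β m x)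
    rw [← hβ.homFunctorEquiv_curry, heq, hβ.homFunctorEquiv_curry]
  ext t
  exact LinearMap.congr_fun this t

variable [IsScalarTower k R E] [IsScalarTower k S E]

theorem curry_surjective (hβ : IsBimoduleTensor R S β) (N : ModuleCat.{u} S) :
    Function.Surjective (hβ.curry (N := N)) := fun φ => by
  let γ : M →ₗ[k] E →ₗ[k] N := LinearMap.mk₂ k (fun m x => homFunctorEquiv N (φ m) x)
    (fun m m' x => by rw [map_add, map_add, LinearMap.add_apply])
    (fun c m x => by rw [LinearMap.map_smul_of_tower, homFunctorEquiv_algebra_smul])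
    (fun m x y => map_add _ x y) (fun c m x => LinearMap.map_smul_of_tower _ c x)
  obtain ⟨g, hg⟩ := hβ.exists_linear_lift γ
    (fun r m x => LinearMap.congr_fun (congrArg (homFunctorEquiv N) (map_smul φ.hom (op r) m)) x)
    (fun s m x => map_smul (homFunctorEquiv N (φ m)) s x)
  refine ⟨ofHom g, ?_⟩
  ext m
  exact (homFunctorEquiv N).injective (LinearMap.ext (hg m))

/-- Tensor-hom adjunction at `M`: the module `M ⊗_R E` corepresents `N ↦ Hom_R(M, Hom_S(E, N))`. -/
noncomputable def corepresentableBy (hβ : IsBimoduleTensor R S β) :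
    (homFunctor R S E ⋙ coyoneda.obj (.op M)).CorepresentableBy T where
  homEquiv {N} := Equiv.ofBijective _ ⟨hβ.curry_injective N, hβ.curry_surjective N⟩
  homEquiv_comp _ _ := rfl

theorem nonempty_ext_iso [Module.Projective S E] (hβ : IsBimoduleTensor R S β)
    (hE : IsEquationallyFlat R E) (N : ModuleCat.{u} S) (n : ℕ) :
    Nonempty (((Ext k (ModuleCat.{u} S) n).obj (.op T)).obj N ≅
      ((Ext k (ModuleCat.{u} Rᵐᵒᵖ) n).obj (.op M)).obj ((homFunctor R S E).obj N)) := by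
  have := hE.homFunctor_preservesInjectiveObjects (S := S)
  let adj := Adjunction.ofIsRightAdjoint (homFunctor R S E)
  let tensorIso := (adj.corepresentableBy M).uniqueUpToIso hβ.corepresentableBy
  obtain ⟨adjIso⟩ := nonempty_ext_iso_of_adjunction_of_preservesInjectiveObjects k adj M N n
  exact ⟨((Ext k _ n).mapIso tensorIso.op).app N ≪≫ adjIso⟩

end IsBimoduleTensor

end TensorHomAdjunction

section Corner

variable {k A B : Type} [Field k] [Ring A] [Algebra k A] [Ring B] [Algebra k B]

/-- The right ideal `eA` as a `B`-`A`-bimodule. The homomorphism `ι` and the proofs that it is one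
are part of the type so that the left action of `B` can be found by instance search. -/
def CornerBimodule (e : A) (_ : e * e = e) (ι : B →ₗ[k] A)
    (_ : ∀ x y : B, ι (x * y) = ι x * ι y) (_ : ι 1 = e) : Type :=
  ↥(eASub k A e)

namespace CornerBimodule

variable {e : A} {he : e * e = e} {ι : B →ₗ[k] A} {hmul : ∀ x y : B, ι (x * y) = ι x * ι y}
  {hone : ι 1 = e}

noncomputable instance : AddCommGroup (CornerBimodule e he ι hmul hone) :=
  inferInstanceAs (AddCommGroup (eASub k A e))

noncomputable instance : Module k (CornerBimodule e he ι hmul hone) :=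
  inferInstanceAs (Module k (eASub k A e))

noncomputable instance : Module B (CornerBimodule e he ι hmul hone) :=
  eAModule e he ι hmul hone

/-- The inclusion of `eA` in `A`. -/
noncomputable def val : CornerBimodule e he ι hmul hone →ₗ[k] A :=
  (eASub k A e).subtype

theorem val_injective :
    Function.Injective (val : CornerBimodule e he ι hmul hone →ₗ[k] A) :=
  Subtype.val_injective

theorem mul_val (x : CornerBimodule e he ι hmul hone) : e * val x = val x := by
  obtain ⟨_, c, rfl⟩ := x
  change e * (e * c) = e * c
  rw [← mul_assoc, he]

noncomputable instance : SMul Aᵐᵒᵖ (CornerBimodule e he ι hmul hone) where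
  smul a x := ⟨val x * unop a, val x * unop a, by
    rw [LinearMap.mulLeft_apply, ← mul_assoc, mul_val]⟩

noncomputable instance : Module Aᵐᵒᵖ (CornerBimodule e he ι hmul hone) :=
  val_injective.module Aᵐᵒᵖ val.toAddMonoidHom fun _ _ => rfl

theorem val_smul (b : B) (x : CornerBimodule e he ι hmul hone) : val (b • x) = ι b * val x := rfl

theorem val_op_smul (a : Aᵐᵒᵖ) (x : CornerBimodule e he ι hmul hone) :
    val (a • x) = val x * unop a := rfl

instance : IsScalarTower k B (CornerBimodule e he ι hmul hone) where
  smul_assoc c b x := val_injective <| by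
    rw [LinearMap.map_smul val, val_smul, val_smul, map_smul, smul_mul_assoc]

instance : IsScalarTower k Aᵐᵒᵖ (CornerBimodule e he ι hmul hone) where
  smul_assoc c a x := val_injective <| by
    rw [LinearMap.map_smul val, val_op_smul, val_op_smul, unop_smul, mul_smul_comm]

instance : SMulCommClass B Aᵐᵒᵖ (CornerBimodule e he ι hmul hone) where
  smul_comm b a x := val_injective <| by
    rw [val_smul, val_op_smul, val_op_smul, val_smul, mul_assoc]

/-- The idempotent `e`, as an element of `eA`. -/
noncomputable def generator : CornerBimodule e he ι hmul hone := ⟨e, e, he⟩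

theorem op_val_smul_generator (x : CornerBimodule e he ι hmul hone) :
    op (val x) • (generator : CornerBimodule e he ι hmul hone) = x :=
  val_injective (mul_val x)

theorem smul_generator (b : B) :
    b • (generator : CornerBimodule e he ι hmul hone) = op (ι b) • generator :=
  val_injective <|
    (iota_mem_corner e ι hmul hone b).2.symm.trans (iota_mem_corner e ι hmul hone b).1

instance : Module.Projective Aᵐᵒᵖ (CornerBimodule e he ι hmul hone) :=
  .of_split (M := Aᵐᵒᵖ)
    { toFun x := op (val x)
      map_add' _ _ := rfl
      map_smul' _ _ := rfl }
    (LinearMap.toSpanSingleton Aᵐᵒᵖ _ generator)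
    (LinearMap.ext op_val_smul_generator)

theorem apply_generator_mem_NeSub {N : ModuleCat Aᵐᵒᵖ}
    (f : CornerBimodule e he ι hmul hone →ₗ[Aᵐᵒᵖ] N) : f generator ∈ NeSub k A e N :=
  Submodule.subset_span ⟨f generator, by
    rw [← map_smul]
    exact congrArg f (op_val_smul_generator generator).symm⟩

variable (e he ι hmul hone) in
/-- Evaluation at `e` identifies `Hom_A(eA, N)` with `N·e`, as right `B`-modules. -/
noncomputable def homFunctorObjEquiv (N : ModuleCat Aᵐᵒᵖ) :
    letI := NeModule e he ι hmul hone N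
    (homFunctor B Aᵐᵒᵖ (CornerBimodule e he ι hmul hone)).obj N ≃ₗ[Bᵐᵒᵖ] NeSub k A e N :=
  letI := NeModule e he ι hmul hone N
  { toFun f := ⟨homFunctorEquiv N f generator, apply_generator_mem_NeSub _⟩
    map_add' _ _ := rfl
    map_smul' b f := Subtype.ext <|
      (congrArg (homFunctorEquiv N f) (smul_generator (unop b))).trans (map_smul _ _ _)
    invFun v := (homFunctorEquiv N).symm
      { toFun x := op (val x) • v.1
        map_add' x y := by rw [map_add, MulOpposite.op_add, add_smul]
        map_smul' a x := by rw [val_op_smul, op_mul, op_unop, mul_smul, RingHom.id_apply] }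
    left_inv f := (homFunctorEquiv N).injective <| LinearMap.ext fun x =>
      ((homFunctorEquiv N f).map_smul _ _).symm.trans
        (congrArg (homFunctorEquiv N f) (op_val_smul_generator x))
    right_inv v := Subtype.ext (e_smul_of_mem_NeSub he N v.2) }

theorem isEquationallyFlat
    (hflat : ∀ (n : ℕ) (b : Fin n → B) (x : Fin n → ↥(eASub k A e)),
      (∑ i, ι (b i) * ((x i : A))) = 0 →
      ∃ (m : ℕ) (c : Fin n → Fin m → B) (y : Fin m → ↥(eASub k A e)),
        (∀ i, ((x i : A)) = ∑ j, ι (c i j) * ((y j : A))) ∧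
        (∀ j, (∑ i, b i * c i j) = 0)) :
    IsEquationallyFlat B (CornerBimodule e he ι hmul hone) := fun n b x h => by
  obtain ⟨m, c, y, hx, hc⟩ := hflat n b x (by simpa only [map_sum, map_zero] using! congrArg val h)
  let y : Fin m → CornerBimodule e he ι hmul hone := y
  exact ⟨m, c, y, fun i => val_injective <|
    (hx i).trans (map_sum val (fun j => c i j • y j) Finset.univ).symm, hc⟩

theorem isBimoduleTensor {M : ModuleCat Bᵐᵒᵖ} {T : ModuleCat Aᵐᵒᵖ}
    {β : M →ₗ[k] CornerBimodule e he ι hmul hone →ₗ[k] T}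
    (hbal : ∀ (b : B) (m : M) (x y : ↥(eASub k A e)), (y : A) = ι b * (x : A) →
      β (op b • m) x = β m y)
    (hequiv : ∀ (a : A) (m : M) (x y : ↥(eASub k A e)), (y : A) = (x : A) * a →
      β m y = op a • β m x)
    (huniv : ∀ (V : Type) [AddCommGroup V] [Module k V]
      (γ : M →ₗ[k] (↥(eASub k A e) →ₗ[k] V)),
      (∀ (b : B) (m : M) (x y : ↥(eASub k A e)), (y : A) = ι b * (x : A) →
        γ (op b • m) x = γ m y) →
      ∃! g : ↥T →ₗ[k] V, ∀ (m : M) (x : ↥(eASub k A e)), g (β m x) = γ m x) :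
    IsBimoduleTensor B Aᵐᵒᵖ β where
  balanced b m x := hbal b m x _ rfl
  map_smul_right a m x := hequiv (unop a) m x _ rfl
  existsUnique_lift V _ _ γ hγ := huniv V γ
    fun b m (x _ : CornerBimodule e he ι hmul hone) hy =>
      (hγ b m x).trans (congrArg (γ m) (val_injective hy.symm))

end CornerBimodule

end Corner

theorem stmt6_general (k A B : Type) [Field k] [Ring A] [Algebra k A] [Ring B] [Algebra k B]
    (e : A) (he : e * e = e)
    (ι : B →ₗ[k] A) (hmul : ∀ x y : B, ι (x * y) = ι x * ι y) (hone : ι 1 = e)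
    (M : ModuleCat Bᵐᵒᵖ) (N T : ModuleCat Aᵐᵒᵖ)
    (β : M →ₗ[k] (↥(eASub k A e) →ₗ[k] T))
    (hbal : ∀ (b : B) (m : M) (x y : ↥(eASub k A e)), (y : A) = ι b * (x : A) →
      β (op b • m) x = β m y)
    (hequiv : ∀ (a : A) (m : M) (x y : ↥(eASub k A e)), (y : A) = (x : A) * a →
      β m y = op a • β m x)
    (huniv : ∀ (V : Type) [AddCommGroup V] [Module k V]
      (γ : M →ₗ[k] (↥(eASub k A e) →ₗ[k] V)),
      (∀ (b : B) (m : M) (x y : ↥(eASub k A e)), (y : A) = ι b * (x : A) →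
        γ (op b • m) x = γ m y) →
      ∃! g : ↥T →ₗ[k] V, ∀ (m : M) (x : ↥(eASub k A e)), g (β m x) = γ m x)
    (hflat : ∀ (n : ℕ) (b : Fin n → B) (x : Fin n → ↥(eASub k A e)),
      (∑ i, ι (b i) * ((x i : A))) = 0 →
      ∃ (m : ℕ) (c : Fin n → Fin m → B) (y : Fin m → ↥(eASub k A e)),
        (∀ i, ((x i : A)) = ∑ j, ι (c i j) * ((y j : A))) ∧
        (∀ j, (∑ i, b i * c i j) = 0))
    (n : ℕ) :
    letI : Module Bᵐᵒᵖ ↥(NeSub k A e N) := NeModule e he ι hmul hone N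
    Nonempty
      ((((Ext k (ModuleCat Aᵐᵒᵖ) n).obj (Opposite.op T)).obj N) ≅
        (((Ext k (ModuleCat Bᵐᵒᵖ) n).obj (Opposite.op M)).obj
          (ModuleCat.of Bᵐᵒᵖ ↥(NeSub k A e N)))) := by
  let β' : M →ₗ[k] CornerBimodule e he ι hmul hone →ₗ[k] T := β
  have hβ : IsBimoduleTensor B Aᵐᵒᵖ β' := CornerBimodule.isBimoduleTensor hbal hequiv huniv
  obtain ⟨bimoduleIso⟩ := hβ.nonempty_ext_iso (CornerBimodule.isEquationallyFlat hflat) N n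
  let evalIso := (CornerBimodule.homFunctorObjEquiv e he ι hmul hone N).toModuleIso
  exact ⟨bimoduleIso ≪≫ ((Ext k _ n).obj _).mapIso evalIso⟩

/-- Eckmann–Shapiro, induction: let `B` be a unital subalgebra of `eAe`
with identity `e` (realized by the injective multiplicative unit-preserving `k`-linear
map `ι : B → A` with `ι 1 = e`), `M` a right `B`-module and `N` a right `A`-module.
The right `A`-module `T`, equipped with the balanced `A`-equivariant universal bilinear
map `β`, is `M ⊗_B eA`.  If `eA` is flat as a left `B`-module (expressed by the standard
equational criterion for flatness, `hflat`), then for all `n ≥ 0`,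
`Ext^n_A(M ⊗_B eA, N) ≅ Ext^n_B(M, N·e)`. -/
theorem stmt6 (k A B : Type) [Field k] [Ring A] [Algebra k A] [Ring B] [Algebra k B]
    (e : A) (he : e * e = e)
    (ι : B →ₗ[k] A) (hmul : ∀ x y : B, ι (x * y) = ι x * ι y) (hone : ι 1 = e)
    (hinj : Function.Injective ι)
    (M : ModuleCat Bᵐᵒᵖ) (N T : ModuleCat Aᵐᵒᵖ)
    (β : M →ₗ[k] (↥(eASub k A e) →ₗ[k] T))
    (hbal : ∀ (b : B) (m : M) (x y : ↥(eASub k A e)), (y : A) = ι b * (x : A) →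
      β (op b • m) x = β m y)
    (hequiv : ∀ (a : A) (m : M) (x y : ↥(eASub k A e)), (y : A) = (x : A) * a →
      β m y = op a • β m x)
    (huniv : ∀ (V : Type) [AddCommGroup V] [Module k V]
      (γ : M →ₗ[k] (↥(eASub k A e) →ₗ[k] V)),
      (∀ (b : B) (m : M) (x y : ↥(eASub k A e)), (y : A) = ι b * (x : A) →
        γ (op b • m) x = γ m y) →
      ∃! g : ↥T →ₗ[k] V, ∀ (m : M) (x : ↥(eASub k A e)), g (β m x) = γ m x)
    (hflat : ∀ (n : ℕ) (b : Fin n → B) (x : Fin n → ↥(eASub k A e)),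
      (∑ i, ι (b i) * ((x i : A))) = 0 →
      ∃ (m : ℕ) (c : Fin n → Fin m → B) (y : Fin m → ↥(eASub k A e)),
        (∀ i, ((x i : A)) = ∑ j, ι (c i j) * ((y j : A))) ∧
        (∀ j, (∑ i, b i * c i j) = 0))
    (n : ℕ) :
    letI : Module Bᵐᵒᵖ ↥(NeSub k A e N) := NeModule e he ι hmul hone N
    Nonempty
      ((((Ext k (ModuleCat Aᵐᵒᵖ) n).obj (Opposite.op T)).obj N) ≅
        (((Ext k (ModuleCat Bᵐᵒᵖ) n).obj (Opposite.op M)).obj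
          (ModuleCat.of Bᵐᵒᵖ ↥(NeSub k A e N)))) :=
  stmt6_general k A B e he ι hmul hone M N T β hbal hequiv huniv hflat n
end
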